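/- Let m ≥ 3 be odd, σ₀ ∈ {−1, +1}, μ ≥ 0, L, T, τ > 0, and let f : ℝ → ℝ be C² with ‖f″‖_∞ := sup_ℝ |f″| < ∞. Let q = (q₀, …, q_{m−1}) be a C¹ solution, L-periodic in x, of ∂_t q₀ + ∂_x f(q₀) + σ₀ ∂_x q_{m−1} = 0 and τ ∂_t q_j + σ₀ (−1)^j ∂_x q_{m−j−1} = σ₀ (−1)^j q_{m−j} − δ_{j,1} μ q₁ (1 ≤ j ≤ m−1). Let q̄ = (q̄₀, …, q̄_{m−1}) be a C¹ tuple, L-periodic in x with ∂_x q̄₀ bounded, satisfying the same system except that the first equation carries a residual: ∂_t q̄₀ + ∂_x f(q̄₀) + σ₀ ∂_x q̄_{m−1} = τ R for some continuous R. Then the relative energy η(q, q̄)(t) = ∫₀^L ( ½ (q₀−q̄₀)² + (τ/2) Σ_{j=1}^{m−1} (q_j−q̄_j)² ) dx satisfies, for all t ∈ [0,T], d/dt η(q, q̄)(t) ≤ ( ‖f″‖_∞ · sup |∂_x q̄₀| + 1 ) η(q, q̄)(t) + τ² ∫₀^L R(t,x)² dx. -/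

import Mathlib

open MeasureTheory

/-- Partial derivative with respect to the first (time) variable. -/
noncomputable def pdt (u : ℝ → ℝ → ℝ) : ℝ → ℝ → ℝ :=
  fun t x => deriv (fun s => u s x) t

/-- Partial derivative with respect to the second (space) variable. -/
noncomputable def pdx (u : ℝ → ℝ → ℝ) : ℝ → ℝ → ℝ :=
  fun t x => deriv (fun y => u t y) x

/-!
The differences `w j = q j - qb j` solve the linear odd-order system with source
`-(∂ₓ f(q 0) - ∂ₓ f(qb 0)) - τ R`. Multiplying the `j`-th equation by `w j` and summing, the
reflection `j ↦ m - 1 - j` turns the alternating sum of the `w j * ∂ₓ w (m - 1 - j)` into a space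
derivative, while the zeroth-order terms `(-1) ^ j * (w j * w (m - j))` cancel in pairs because `m`
is odd. The convective term is a space derivative up to `∂ₓ (qb 0)` times a Taylor remainder that is
quadratic in `w 0`. Integration over a period removes the space derivatives, and Young's inequality
handles the residual.
-/

open scoped NNReal

section PartialDerivatives

variable {u : ℝ → ℝ → ℝ} {t x : ℝ}

theorem hasDerivAt_pdt (hu : DifferentiableAt ℝ (Function.uncurry u) (t, x)) :
    HasDerivAt (fun s => u s x) (pdt u t x) t :=
  (DifferentiableAt.comp t (f := fun s => (s, x)) hu (by fun_prop)).hasDerivAt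

theorem hasDerivAt_pdx (hu : DifferentiableAt ℝ (Function.uncurry u) (t, x)) :
    HasDerivAt (u t) (pdx u t x) x :=
  (DifferentiableAt.comp x (f := fun y => (t, y)) hu (by fun_prop)).hasDerivAt

theorem pdt_eq_fderiv (hu : DifferentiableAt ℝ (Function.uncurry u) (t, x)) :
    pdt u t x = fderiv ℝ (Function.uncurry u) (t, x) (1, 0) :=
  (hu.hasFDerivAt.comp_hasDerivAt t (f := fun s => (s, x))
    ((hasDerivAt_id t).prodMk (hasDerivAt_const t x))).deriv

theorem pdx_eq_fderiv (hu : DifferentiableAt ℝ (Function.uncurry u) (t, x)) :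
    pdx u t x = fderiv ℝ (Function.uncurry u) (t, x) (0, 1) :=
  (hu.hasFDerivAt.comp_hasDerivAt x (f := fun y => (t, y))
    ((hasDerivAt_const x t).prodMk (hasDerivAt_id x))).deriv

theorem continuous_uncurry_pdt (hu : ContDiff ℝ 1 (Function.uncurry u)) :
    Continuous (Function.uncurry (pdt u)) :=
  ((hu.continuous_fderiv one_ne_zero).clm_apply continuous_const).congr fun p =>
    (pdt_eq_fderiv (hu.differentiable one_ne_zero p)).symm

theorem continuous_uncurry_pdx (hu : ContDiff ℝ 1 (Function.uncurry u)) :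
    Continuous (Function.uncurry (pdx u)) :=
  ((hu.continuous_fderiv one_ne_zero).clm_apply continuous_const).congr fun p =>
    (pdx_eq_fderiv (hu.differentiable one_ne_zero p)).symm

theorem hasDerivAt_intervalIntegral_pdt (hu : ContDiff ℝ 1 (Function.uncurry u)) (a b t : ℝ) :
    HasDerivAt (fun s => ∫ x in a..b, u s x) (∫ x in a..b, pdt u t x) t := by
  have hpdt := continuous_uncurry_pdt hu
  have hslice (s : ℝ) : Continuous (u s) := hu.continuous.uncurry_left s
  obtain ⟨C, hC⟩ := ((isCompact_closedBall t 1).prod (isCompact_uIcc (a := a) (b := b)))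
    |>.exists_bound_of_continuousOn hpdt.continuousOn
  exact (intervalIntegral.hasDerivAt_integral_of_dominated_loc_of_deriv_le
    (bound := fun _ => C) (Metric.closedBall_mem_nhds t one_pos)
    (.of_forall fun s => (hslice s).aestronglyMeasurable)
    ((hslice t).intervalIntegrable a b) (hpdt.uncurry_left t).aestronglyMeasurable
    (.of_forall fun x hx s hs => hC (s, x) ⟨hs, Set.uIoc_subset_uIcc hx⟩)
    intervalIntegrable_const
    (.of_forall fun x _ s _ => hasDerivAt_pdt (hu.differentiable one_ne_zero (s, x)))).2

theorem integral_pdx_eq_sub (hu : ContDiff ℝ 1 (Function.uncurry u)) (a b t : ℝ) :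
    ∫ x in a..b, pdx u t x = u t b - u t a :=
  intervalIntegral.integral_eq_sub_of_hasDerivAt
    (fun x _ => hasDerivAt_pdx (hu.differentiable one_ne_zero (t, x)))
    (((continuous_uncurry_pdx hu).uncurry_left t).intervalIntegrable a b)

theorem integral_pdt_le_of_pdt_add_pdx_le {e F : ℝ → ℝ → ℝ} {g : ℝ → ℝ} {a b t : ℝ}
    (he : ContDiff ℝ 1 (Function.uncurry e)) (hF : ContDiff ℝ 1 (Function.uncurry F))
    (hg : IntervalIntegrable g volume a b) (hab : a ≤ b) (hbd : F t b = F t a)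
    (h : ∀ x ∈ Set.Icc a b, pdt e t x + pdx F t x ≤ g x) :
    ∫ x in a..b, pdt e t x ≤ ∫ x in a..b, g x := by
  have hpdt : IntervalIntegrable (pdt e t) volume a b :=
    ((continuous_uncurry_pdt he).uncurry_left t).intervalIntegrable a b
  have hpdx : IntervalIntegrable (pdx F t) volume a b :=
    ((continuous_uncurry_pdx hF).uncurry_left t).intervalIntegrable a b
  calc ∫ x in a..b, pdt e t x
      = ∫ x in a..b, (pdt e t x + pdx F t x) := by
        rw [intervalIntegral.integral_add hpdt hpdx, integral_pdx_eq_sub hF, hbd, sub_self,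
          add_zero]
    _ ≤ ∫ x in a..b, g x := intervalIntegral.integral_mono_on hab (hpdt.add hpdx) hg h

end PartialDerivatives

theorem sub_sub_deriv_mul_eq_integral {f : ℝ → ℝ} (hf : ContDiff ℝ 1 f) (u v : ℝ) :
    f u - f v - deriv f v * (u - v)
      = ∫ s in (0 : ℝ)..1, (deriv f (v + s * (u - v)) - deriv f v) * (u - v) := by
  have hline (s : ℝ) : HasDerivAt (fun s => f (v + s * (u - v)) - s * (deriv f v * (u - v)))
      ((deriv f (v + s * (u - v)) - deriv f v) * (u - v)) s := by
    have hs : HasDerivAt (fun s => v + s * (u - v)) (u - v) s := by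
      simpa using ((hasDerivAt_id s).mul_const (u - v)).const_add v
    convert! ((hf.differentiable one_ne_zero _).hasDerivAt.comp s hs).sub
      ((hasDerivAt_id s).mul_const (deriv f v * (u - v))) using 1
    ring
  have hcont : Continuous fun s => (deriv f (v + s * (u - v)) - deriv f v) * (u - v) := by
    have := hf.continuous_deriv le_rfl
    fun_prop
  rw [intervalIntegral.integral_eq_sub_of_hasDerivAt (fun s _ => hline s)
    (hcont.intervalIntegrable 0 1)]
  simp only [one_mul, zero_mul, add_sub_cancel, add_zero, sub_zero]
  ring

theorem abs_sub_sub_deriv_mul_le {f : ℝ → ℝ} (hf : Differentiable ℝ f) {K : ℝ≥0}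
    (hK : LipschitzWith K (deriv f)) (u v : ℝ) :
    |f u - f v - deriv f v * (u - v)| ≤ K / 2 * (u - v) ^ 2 := by
  have hbound : ∀ s ∈ Set.Ioc (0 : ℝ) 1,
      ‖(deriv f (v + s * (u - v)) - deriv f v) * (u - v)‖ ≤ s * (K * (u - v) ^ 2) := by
    intro s hs
    have hlip := hK.dist_le_mul (v + s * (u - v)) v
    rw [Real.dist_eq, Real.dist_eq, add_sub_cancel_left, abs_mul, abs_of_pos hs.1] at hlip
    calc ‖(deriv f (v + s * (u - v)) - deriv f v) * (u - v)‖
        ≤ K * (s * |u - v|) * |u - v| := by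
          rw [Real.norm_eq_abs, abs_mul]
          gcongr
      _ = s * (K * (u - v) ^ 2) := by rw [← sq_abs (u - v)]; ring
  calc |f u - f v - deriv f v * (u - v)|
      ≤ ∫ s in (0 : ℝ)..1, s * (K * (u - v) ^ 2) := by
        rw [sub_sub_deriv_mul_eq_integral (contDiff_one_iff_deriv.2 ⟨hf, hK.continuous⟩),
          ← Real.norm_eq_abs]
        exact intervalIntegral.norm_integral_le_of_norm_le zero_le_one
          (.of_forall hbound) (Continuous.intervalIntegrable (by fun_prop) 0 1)
    _ = K / 2 * (u - v) ^ 2 := by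
        rw [intervalIntegral.integral_mul_const, integral_id]
        ring

section RelativeFlux

/-- The flux `∫ z in v..u, f' z * (z - v)` of the relative entropy `(u - v) ^ 2 / 2` of the scalar
conservation law with flux `f`, integrated by parts. -/
noncomputable def relativeFlux (f : ℝ → ℝ) (u v : ℝ) : ℝ :=
  (u - v) * f u - ∫ z in v..u, f z

variable {f : ℝ → ℝ}

theorem hasFDerivAt_intervalIntegral_endpoints (hf : Continuous f) (p : ℝ × ℝ) :
    HasFDerivAt (fun p : ℝ × ℝ => ∫ z in p.1..p.2, f z)
      ((ContinuousLinearMap.snd ℝ ℝ ℝ).smulRight (f p.2)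
        - (ContinuousLinearMap.fst ℝ ℝ ℝ).smulRight (f p.1)) p :=
  intervalIntegral.integral_hasFDerivAt (hf.intervalIntegrable _ _)
    (hf.stronglyMeasurableAtFilter _ _) (hf.stronglyMeasurableAtFilter _ _) hf.continuousAt
    hf.continuousAt

theorem contDiff_intervalIntegral_endpoints (hf : Continuous f) :
    ContDiff ℝ 1 (fun p : ℝ × ℝ => ∫ z in p.1..p.2, f z) := by
  have hF := hasFDerivAt_intervalIntegral_endpoints hf
  refine contDiff_one_iff_fderiv.2 ⟨fun p => (hF p).differentiableAt, ?_⟩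
  simp only [funext fun p => (hF p).fderiv]
  fun_prop

theorem contDiff_relativeFlux (hf : ContDiff ℝ 1 f) :
    ContDiff ℝ 1 (Function.uncurry (relativeFlux f)) :=
  ((contDiff_fst.sub contDiff_snd).mul (hf.comp contDiff_fst)).sub
    ((contDiff_intervalIntegral_endpoints hf.continuous).comp (contDiff_snd.prodMk contDiff_fst))

theorem hasDerivAt_relativeFlux {u v : ℝ → ℝ} {f' u' v' x : ℝ} (hf : Continuous f)
    (hfu : HasDerivAt f f' (u x)) (hu : HasDerivAt u u' x) (hv : HasDerivAt v v' x) :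
    HasDerivAt (fun y => relativeFlux f (u y) (v y))
      ((u x - v x) * (f' * u') - v' * (f (u x) - f (v x))) x := by
  have hint := (hasFDerivAt_intervalIntegral_endpoints hf (v x, u x)).comp_hasDerivAt x
    (hv.prodMk hu)
  convert! ((hu.sub hv).mul (hfu.comp x hu)).sub hint using 1
  simp only [Function.comp_apply, Pi.sub_apply, sub_apply,
    ContinuousLinearMap.smulRight_apply, ContinuousLinearMap.coe_snd',
    ContinuousLinearMap.coe_fst', smul_eq_mul]
  ring

theorem sub_mul_pdx_comp_sub_pdx_comp (hf : Differentiable ℝ f) {u v : ℝ → ℝ → ℝ} {t x : ℝ}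
    (hu : DifferentiableAt ℝ (Function.uncurry u) (t, x))
    (hv : DifferentiableAt ℝ (Function.uncurry v) (t, x)) :
    (u t x - v t x) * (pdx (fun s y => f (u s y)) t x - pdx (fun s y => f (v s y)) t x)
      = pdx (fun s y => relativeFlux f (u s y) (v s y)) t x
        + pdx v t x * (f (u t x) - f (v t x) - deriv f (v t x) * (u t x - v t x)) := by
  have hfu : pdx (fun s y => f (u s y)) t x = deriv f (u t x) * pdx u t x :=
    ((hf _).hasDerivAt.comp x (hasDerivAt_pdx hu)).deriv
  have hfv : pdx (fun s y => f (v s y)) t x = deriv f (v t x) * pdx v t x :=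
    ((hf _).hasDerivAt.comp x (hasDerivAt_pdx hv)).deriv
  have hflux : pdx (fun s y => relativeFlux f (u s y) (v s y)) t x
      = (u t x - v t x) * (deriv f (u t x) * pdx u t x)
        - pdx v t x * (f (u t x) - f (v t x)) :=
    (hasDerivAt_relativeFlux hf.continuous (hf _).hasDerivAt (hasDerivAt_pdx hu)
      (hasDerivAt_pdx hv)).deriv
  rw [hfu, hfv, hflux]
  ring

end RelativeFlux

section AlternatingSums

variable {A : Type*} [CommRing A] {m : ℕ}

theorem sum_range_neg_one_pow_mul_reflect_comm (hm : Odd m) (a b : ℕ → A) :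
    ∑ j ∈ Finset.range m, (-1) ^ j * (b j * a (m - 1 - j))
      = ∑ j ∈ Finset.range m, (-1) ^ j * (a j * b (m - 1 - j)) := by
  rw [← Finset.sum_range_reflect]
  refine Finset.sum_congr rfl fun j hj => ?_
  have hjm := Finset.mem_range.mp hj
  rw [neg_one_pow_congr (show Even (m - 1 - j) ↔ Even j by grind),
    Nat.sub_sub_self (by lia), mul_comm (b _)]

theorem sum_Icc_neg_one_pow_mul_reflect_eq_zero (hm : Odd m) (a : ℕ → A) :
    ∑ j ∈ Finset.Icc 1 (m - 1), (-1) ^ j * (a j * a (m - j)) = 0 := by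
  refine Finset.sum_involution (fun j _ => m - j) ?_ ?_ ?_ ?_ <;> intro j hj
  all_goals have hjm := Finset.mem_Icc.mp hj
  · rw [neg_one_pow_congr (show Even (m - j) ↔ Even (j + 1) by grind),
      Nat.sub_sub_self (by lia)]
    ring
  · grind
  · exact Finset.mem_Icc.mpr (by lia)
  · lia

end AlternatingSums

/-- At the point `(t, x)`, the tuple `q 0, …, q (m - 1)` satisfies the first-order system that
approximates `∂ₜ u + ∂ₓ f(u) - μ ∂ₓ² u + σ₀ ∂ₓᵐ u = 0`, up to a residual `r` in the first equation.
For `f = 0` the system is linear. -/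
structure SolvesOddOrderSystemAt (m : ℕ) (σ₀ μ τ : ℝ) (f : ℝ → ℝ) (q : ℕ → ℝ → ℝ → ℝ)
    (r t x : ℝ) : Prop where
  conservation :
    pdt (q 0) t x + pdx (fun s y => f (q 0 s y)) t x + σ₀ * pdx (q (m - 1)) t x = r
  relaxation : ∀ j ∈ Finset.Icc 1 (m - 1),
    τ * pdt (q j) t x + σ₀ * (-1 : ℝ) ^ j * pdx (q (m - j - 1)) t x
      = σ₀ * (-1 : ℝ) ^ j * q (m - j) t x - (if j = 1 then μ * q 1 t x else 0)

/-- The quadratic energy density of the odd-order system, whose integral over a period is the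
energy; applied to `q - qb` it gives the integrand of `η(q, qb)`. -/
noncomputable def energyDensity (m : ℕ) (τ : ℝ) (w : ℕ → ℝ → ℝ → ℝ) (t x : ℝ) : ℝ :=
  w 0 t x ^ 2 / 2 + τ / 2 * ∑ j ∈ Finset.Icc 1 (m - 1), w j t x ^ 2

/-- The flux of `energyDensity` generated by the linear part of the odd-order system. -/
noncomputable def linearEnergyFlux (m : ℕ) (σ₀ : ℝ) (w : ℕ → ℝ → ℝ → ℝ) (t x : ℝ) : ℝ :=
  σ₀ / 2 * ∑ j ∈ Finset.range m, (-1 : ℝ) ^ j * (w j t x * w (m - 1 - j) t x)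

/-- The relative energy `η(q, qb)` over the period `[0, L]`. -/
noncomputable def relativeEnergy (m : ℕ) (τ L : ℝ) (q qb : ℕ → ℝ → ℝ → ℝ) (t : ℝ) : ℝ :=
  ∫ x in (0 : ℝ)..L, energyDensity m τ (q - qb) t x

/-- The flux of the relative energy density `energyDensity m τ (q - qb)`: a convective part from `f`
and the linear part. -/
noncomputable def relativeEnergyFlux (m : ℕ) (σ₀ : ℝ) (f : ℝ → ℝ) (q qb : ℕ → ℝ → ℝ → ℝ)
    (t x : ℝ) : ℝ :=
  relativeFlux f (q 0 t x) (qb 0 t x) + linearEnergyFlux m σ₀ (q - qb) t x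

section LinearSystem

variable {m : ℕ} {σ₀ μ τ t x : ℝ} {w : ℕ → ℝ → ℝ → ℝ}

theorem contDiff_energyDensity (hm : 0 < m)
    (hw : ∀ j < m, ContDiff ℝ 1 (Function.uncurry (w j))) :
    ContDiff ℝ 1 (Function.uncurry (energyDensity m τ w)) := by
  refine (((hw 0 hm).pow 2).div_const 2).add (contDiff_const.mul (.sum fun j hj => ?_))
  exact (hw j (by have := Finset.mem_Icc.mp hj; lia)).pow 2

theorem contDiff_linearEnergyFlux (hw : ∀ j < m, ContDiff ℝ 1 (Function.uncurry (w j))) :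
    ContDiff ℝ 1 (Function.uncurry (linearEnergyFlux m σ₀ w)) := by
  refine contDiff_const.mul (.sum fun j hj => contDiff_const.mul ?_)
  have hjm := Finset.mem_range.mp hj
  exact (hw j hjm).mul (hw (m - 1 - j) (by lia))

theorem pdt_energyDensity (hm : 0 < m)
    (hw : ∀ j < m, DifferentiableAt ℝ (Function.uncurry (w j)) (t, x)) :
    pdt (energyDensity m τ w) t x
      = w 0 t x * pdt (w 0) t x
        + ∑ j ∈ Finset.Icc 1 (m - 1), w j t x * (τ * pdt (w j) t x) := by
  have hsq (j : ℕ) (hj : j < m) := (hasDerivAt_pdt (hw j hj)).pow 2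
  have hsum := HasDerivAt.fun_sum (u := Finset.Icc 1 (m - 1)) fun j hj =>
    hsq j (by have := Finset.mem_Icc.mp hj; lia)
  refine (((hsq 0 hm).div_const 2).add (hsum.const_mul (τ / 2))).deriv.trans ?_
  rw [Finset.mul_sum]
  congr 1
  · ring
  · exact Finset.sum_congr rfl fun j _ => by ring

theorem pdx_linearEnergyFlux (hm : Odd m)
    (hw : ∀ j < m, DifferentiableAt ℝ (Function.uncurry (w j)) (t, x)) :
    pdx (linearEnergyFlux m σ₀ w) t x
      = σ₀ * ∑ j ∈ Finset.range m, (-1 : ℝ) ^ j * (w j t x * pdx (w (m - 1 - j)) t x) := by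
  have hprod (j : ℕ) (hj : j ∈ Finset.range m) :=
    ((hasDerivAt_pdx (hw j (Finset.mem_range.mp hj))).mul
      (hasDerivAt_pdx (hw (m - 1 - j) (by have := Finset.mem_range.mp hj; lia)))).const_mul
        ((-1 : ℝ) ^ j)
  refine ((HasDerivAt.fun_sum hprod).const_mul (σ₀ / 2)).deriv.trans ?_
  simp only [mul_add, Finset.sum_add_distrib]
  rw [sum_range_neg_one_pow_mul_reflect_comm hm (fun j => w j t x) (fun j => pdx (w j) t x)]
  ring

theorem SolvesOddOrderSystemAt.sub {f : ℝ → ℝ} {q qb : ℕ → ℝ → ℝ → ℝ} {r rb : ℝ} (hm : 0 < m)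
    (hq : ∀ j < m, DifferentiableAt ℝ (Function.uncurry (q j)) (t, x))
    (hqb : ∀ j < m, DifferentiableAt ℝ (Function.uncurry (qb j)) (t, x))
    (h : SolvesOddOrderSystemAt m σ₀ μ τ f q r t x)
    (hb : SolvesOddOrderSystemAt m σ₀ μ τ f qb rb t x) :
    SolvesOddOrderSystemAt m σ₀ μ τ 0 (q - qb)
      (r - rb - (pdx (fun s y => f (q 0 s y)) t x - pdx (fun s y => f (qb 0 s y)) t x)) t x := by
  have hpdt (j : ℕ) (hj : j < m) : pdt ((q - qb) j) t x = pdt (q j) t x - pdt (qb j) t x :=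
    ((hasDerivAt_pdt (hq j hj)).sub (hasDerivAt_pdt (hqb j hj))).deriv
  have hpdx (j : ℕ) (hj : j < m) : pdx ((q - qb) j) t x = pdx (q j) t x - pdx (qb j) t x :=
    ((hasDerivAt_pdx (hq j hj)).sub (hasDerivAt_pdx (hqb j hj))).deriv
  have hzero : pdx (fun s y => (0 : ℝ → ℝ) ((q - qb) 0 s y)) t x = 0 := deriv_const x 0
  constructor
  · rw [hpdt 0 hm, hpdx (m - 1) (by lia), hzero]
    linarith [h.conservation, hb.conservation]
  · intro j hj
    have hjm := Finset.mem_Icc.mp hj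
    rw [hpdt j (by lia), hpdx (m - j - 1) (by lia)]
    simp only [Pi.sub_apply]
    have hj₁ := h.relaxation j hj
    have hj₂ := hb.relaxation j hj
    split_ifs at hj₁ hj₂ ⊢ <;> linarith

theorem SolvesOddOrderSystemAt.pdt_energyDensity_add_pdx_le {g : ℝ} (hm : Odd m) (hμ : 0 ≤ μ)
    (hw : ∀ j < m, DifferentiableAt ℝ (Function.uncurry (w j)) (t, x))
    (h : SolvesOddOrderSystemAt m σ₀ μ τ 0 w g t x) :
    pdt (energyDensity m τ w) t x + pdx (linearEnergyFlux m σ₀ w) t x ≤ w 0 t x * g := by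
  have hzero : pdx (fun s y => (0 : ℝ → ℝ) (w 0 s y)) t x = 0 := deriv_const x 0
  have hfirst : pdt (w 0) t x = g - σ₀ * pdx (w (m - 1)) t x := by
    linarith [h.conservation]
  have hrest : ∑ j ∈ Finset.Icc 1 (m - 1), w j t x * (τ * pdt (w j) t x)
      = σ₀ * ∑ j ∈ Finset.Icc 1 (m - 1), (-1 : ℝ) ^ j * (w j t x * w (m - j) t x)
        - σ₀ * ∑ j ∈ Finset.Icc 1 (m - 1), (-1 : ℝ) ^ j * (w j t x * pdx (w (m - 1 - j)) t x)
        - ∑ j ∈ Finset.Icc 1 (m - 1), w j t x * (if j = 1 then μ * w 1 t x else 0) := by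
    simp only [Finset.mul_sum, ← Finset.sum_sub_distrib]
    refine Finset.sum_congr rfl fun j hj => ?_
    rw [eq_sub_of_add_eq (h.relaxation j hj), Nat.sub_right_comm]
    ring
  have hdamping :
      0 ≤ ∑ j ∈ Finset.Icc 1 (m - 1), w j t x * (if j = 1 then μ * w 1 t x else 0) := by
    refine Finset.sum_nonneg fun j _ => ?_
    split_ifs with hj
    · rw [hj, mul_left_comm]
      exact mul_nonneg hμ (mul_self_nonneg _)
    · simp
  rw [pdt_energyDensity hm.pos hw, pdx_linearEnergyFlux hm hw, hfirst, hrest,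
    sum_Icc_neg_one_pow_mul_reflect_eq_zero hm (fun j => w j t x),
    Finset.sum_range_eq_add_Ico _ hm.pos, ← Finset.Icc_sub_one_right_eq_Ico_of_not_isMin
      (not_isMin_of_lt hm.pos)]
  simp only [pow_zero, Nat.sub_zero]
  linarith

end LinearSystem

section RelativeEnergy

variable {m : ℕ} {σ₀ μ τ t : ℝ} {f : ℝ → ℝ} {K : ℝ≥0} {q qb : ℕ → ℝ → ℝ → ℝ}

theorem contDiff_relativeEnergyFlux (hm : 0 < m) (hf : ContDiff ℝ 1 f)
    (hq : ∀ j < m, ContDiff ℝ 1 (Function.uncurry (q j)))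
    (hqb : ∀ j < m, ContDiff ℝ 1 (Function.uncurry (qb j))) :
    ContDiff ℝ 1 (Function.uncurry (relativeEnergyFlux m σ₀ f q qb)) :=
  ((contDiff_relativeFlux hf).comp ((hq 0 hm).prodMk (hqb 0 hm))).add
    (contDiff_linearEnergyFlux fun j hj => (hq j hj).sub (hqb j hj))

theorem relativeEnergyFlux_congr {x y : ℝ} (hm : 0 < m) (hq : ∀ j < m, q j t x = q j t y)
    (hqb : ∀ j < m, qb j t x = qb j t y) :
    relativeEnergyFlux m σ₀ f q qb t x = relativeEnergyFlux m σ₀ f q qb t y := by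
  simp only [relativeEnergyFlux, linearEnergyFlux, Pi.sub_apply, hq 0 hm, hqb 0 hm]
  congr 2
  refine Finset.sum_congr rfl fun j hj => ?_
  have hjm := Finset.mem_range.mp hj
  rw [hq j hjm, hqb j hjm, hq (m - 1 - j) (by lia), hqb (m - 1 - j) (by lia)]

theorem pdx_relativeEnergyFlux {x : ℝ} (hm : 0 < m) (hf : ContDiff ℝ 1 f)
    (hq : ∀ j < m, ContDiff ℝ 1 (Function.uncurry (q j)))
    (hqb : ∀ j < m, ContDiff ℝ 1 (Function.uncurry (qb j))) :
    pdx (relativeEnergyFlux m σ₀ f q qb) t x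
      = pdx (fun s y => relativeFlux f (q 0 s y) (qb 0 s y)) t x
        + pdx (linearEnergyFlux m σ₀ (q - qb)) t x := by
  have hconv : ContDiff ℝ 1
      (Function.uncurry fun s y => relativeFlux f (q 0 s y) (qb 0 s y)) :=
    (contDiff_relativeFlux hf).comp ((hq 0 hm).prodMk (hqb 0 hm))
  have hlin : ContDiff ℝ 1 (Function.uncurry (linearEnergyFlux m σ₀ (q - qb))) :=
    contDiff_linearEnergyFlux fun j hj => (hq j hj).sub (hqb j hj)
  exact ((hasDerivAt_pdx (hconv.differentiable one_ne_zero (t, x))).add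
    (hasDerivAt_pdx (hlin.differentiable one_ne_zero (t, x)))).deriv

theorem pdt_energyDensity_add_pdx_relativeEnergyFlux_le {B r x : ℝ} (hm : Odd m) (hμ : 0 ≤ μ)
    (hτ : 0 ≤ τ) (hf : ContDiff ℝ 1 f) (hK : LipschitzWith K (deriv f))
    (hq : ∀ j < m, ContDiff ℝ 1 (Function.uncurry (q j)))
    (hqb : ∀ j < m, ContDiff ℝ 1 (Function.uncurry (qb j)))
    (hB : |pdx (qb 0) t x| ≤ B)
    (hsol : SolvesOddOrderSystemAt m σ₀ μ τ f q 0 t x)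
    (hsolb : SolvesOddOrderSystemAt m σ₀ μ τ f qb r t x) :
    pdt (energyDensity m τ (q - qb)) t x + pdx (relativeEnergyFlux m σ₀ f q qb) t x
      ≤ (K * B + 1) * energyDensity m τ (q - qb) t x + r ^ 2 / 2 := by
  have hf₁ : Differentiable ℝ f := hf.differentiable one_ne_zero
  have hqd := fun j hj => (hq j hj).differentiable one_ne_zero (t, x)
  have hqbd := fun j hj => (hqb j hj).differentiable one_ne_zero (t, x)
  set w₀ := q 0 t x - qb 0 t x
  set taylor := f (q 0 t x) - f (qb 0 t x) - deriv f (qb 0 t x) * w₀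
  have henergy := SolvesOddOrderSystemAt.pdt_energyDensity_add_pdx_le (w := q - qb) hm hμ
    (fun j hj => (hqd j hj).sub (hqbd j hj)) (hsol.sub hm.pos hqd hqbd hsolb)
  have hconv := sub_mul_pdx_comp_sub_pdx_comp hf₁ (hqd 0 hm.pos) (hqbd 0 hm.pos)
  have htaylor : -(pdx (qb 0) t x * taylor) ≤ K * B * (w₀ ^ 2 / 2) := by
    calc -(pdx (qb 0) t x * taylor)
        ≤ |pdx (qb 0) t x| * |taylor| := by rw [← abs_mul]; exact neg_le_abs _
      _ ≤ B * (K / 2 * w₀ ^ 2) :=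
        mul_le_mul hB (abs_sub_sub_deriv_mul_le hf₁ hK _ _) (abs_nonneg _)
          ((abs_nonneg _).trans hB)
      _ = K * B * (w₀ ^ 2 / 2) := by ring
  have hyoung : -(w₀ * r) ≤ w₀ ^ 2 / 2 + r ^ 2 / 2 := by nlinarith [sq_nonneg (w₀ + r)]
  have hdensity : (K * B + 1) * (w₀ ^ 2 / 2)
      ≤ (K * B + 1) * energyDensity m τ (q - qb) t x := by
    have hB₀ : 0 ≤ B := (abs_nonneg _).trans hB
    gcongr
    exact le_add_of_nonneg_right (by positivity)
  rw [pdx_relativeEnergyFlux hm.pos hf hq hqb]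
  change _ ≤ w₀ * _ at henergy
  linarith

theorem odd_order_relative_energy_inequality_general {L B : ℝ} {R : ℝ → ℝ}
    (hm : Odd m) (hμ : 0 ≤ μ) (hL : 0 ≤ L) (hτ : 0 ≤ τ)
    (hf : ContDiff ℝ 1 f) (hK : LipschitzWith K (deriv f))
    (hq : ∀ j < m, ContDiff ℝ 1 (Function.uncurry (q j)))
    (hqb : ∀ j < m, ContDiff ℝ 1 (Function.uncurry (qb j)))
    (hR : ContinuousOn R (Set.Icc 0 L))
    (hper : ∀ j < m, q j t L = q j t 0) (hperb : ∀ j < m, qb j t L = qb j t 0)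
    (hB : ∀ x ∈ Set.Icc 0 L, |pdx (qb 0) t x| ≤ B)
    (hsol : ∀ x ∈ Set.Icc 0 L, SolvesOddOrderSystemAt m σ₀ μ τ f q 0 t x)
    (hsolb : ∀ x ∈ Set.Icc 0 L, SolvesOddOrderSystemAt m σ₀ μ τ f qb (τ * R x) t x) :
    ∃ d : ℝ, HasDerivAt (relativeEnergy m τ L q qb) d t ∧
      d ≤ (K * B + 1) * relativeEnergy m τ L q qb t
        + τ ^ 2 / 2 * ∫ x in (0 : ℝ)..L, R x ^ 2 := by
  set e := energyDensity m τ (q - qb)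
  have he : ContDiff ℝ 1 (Function.uncurry e) :=
    contDiff_energyDensity hm.pos fun j hj => (hq j hj).sub (hqb j hj)
  have hie : IntervalIntegrable (fun x => (K * B + 1) * e t x) volume 0 L :=
    ((he.continuous.uncurry_left t).intervalIntegrable 0 L).const_mul _
  have hiR : IntervalIntegrable (fun x => τ ^ 2 / 2 * R x ^ 2) volume 0 L :=
    ((hR.pow 2).intervalIntegrable_of_Icc hL).const_mul _
  refine ⟨_, hasDerivAt_intervalIntegral_pdt he 0 L t, ?_⟩
  calc ∫ x in (0 : ℝ)..L, pdt e t x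
      ≤ ∫ x in (0 : ℝ)..L, ((K * B + 1) * e t x + τ ^ 2 / 2 * R x ^ 2) := by
        refine integral_pdt_le_of_pdt_add_pdx_le he
          (contDiff_relativeEnergyFlux (σ₀ := σ₀) hm.pos hf hq hqb) (hie.add hiR) hL
          (relativeEnergyFlux_congr hm.pos hper hperb) fun x hx => ?_
        refine (pdt_energyDensity_add_pdx_relativeEnergyFlux_le hm hμ hτ hf hK hq hqb (hB x hx)
          (hsol x hx) (hsolb x hx)).trans_eq ?_
        ring
    _ = (K * B + 1) * (∫ x in (0 : ℝ)..L, e t x)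
          + τ ^ 2 / 2 * ∫ x in (0 : ℝ)..L, R x ^ 2 := by
        rw [intervalIntegral.integral_add hie hiR, intervalIntegral.integral_const_mul,
          intervalIntegral.integral_const_mul]

end RelativeEnergy

/-- Relative energy inequality for the generalized odd-order hyperbolic
approximation: if `q` solves the system and `q̄` solves it with a residual `τ R`
in the first equation, then
`d/dt η(q, q̄) ≤ (‖f″‖_∞ · sup|∂_x q̄₀| + 1) η(q, q̄) + τ² ∫₀^L R² dx`. -/
theorem odd_order_relative_energy_inequality
    (m : ℕ) (hm : Odd m) (hm3 : 3 ≤ m)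
    (σ₀ : ℝ) (hσ : σ₀ = 1 ∨ σ₀ = -1) (μ : ℝ) (hμ : 0 ≤ μ)
    (L T τ : ℝ) (hL : 0 < L) (hT : 0 < T) (hτ : 0 < τ)
    (f : ℝ → ℝ) (hf : ContDiff ℝ 2 f)
    (Mf : ℝ) (hMf : ∀ x : ℝ, |deriv (deriv f) x| ≤ Mf)
    (q qb : ℕ → ℝ → ℝ → ℝ) (R : ℝ → ℝ → ℝ)
    (hq : ∀ j < m, ContDiff ℝ 1 (Function.uncurry (q j)))
    (hqb : ∀ j < m, ContDiff ℝ 1 (Function.uncurry (qb j)))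
    (hR : Continuous (Function.uncurry R))
    (hper : ∀ j < m, ∀ t, Function.Periodic (q j t) L)
    (hperb : ∀ j < m, ∀ t, Function.Periodic (qb j t) L)
    (B : ℝ) (hB : ∀ t x : ℝ, |pdx (qb 0) t x| ≤ B)
    (heq₀ : ∀ t ∈ Set.Icc (0:ℝ) T, ∀ x : ℝ,
      pdt (q 0) t x + pdx (fun s y => f (q 0 s y)) t x
        + σ₀ * pdx (q (m - 1)) t x = 0)
    (heq : ∀ j ∈ Finset.Icc 1 (m - 1), ∀ t ∈ Set.Icc (0:ℝ) T, ∀ x : ℝ,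
      τ * pdt (q j) t x + σ₀ * (-1 : ℝ) ^ j * pdx (q (m - j - 1)) t x
        = σ₀ * (-1 : ℝ) ^ j * q (m - j) t x
          - (if j = 1 then μ * q 1 t x else 0))
    (heqb₀ : ∀ t ∈ Set.Icc (0:ℝ) T, ∀ x : ℝ,
      pdt (qb 0) t x + pdx (fun s y => f (qb 0 s y)) t x
        + σ₀ * pdx (qb (m - 1)) t x = τ * R t x)
    (heqb : ∀ j ∈ Finset.Icc 1 (m - 1), ∀ t ∈ Set.Icc (0:ℝ) T, ∀ x : ℝ,
      τ * pdt (qb j) t x + σ₀ * (-1 : ℝ) ^ j * pdx (qb (m - j - 1)) t x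
        = σ₀ * (-1 : ℝ) ^ j * qb (m - j) t x
          - (if j = 1 then μ * qb 1 t x else 0)) :
    ∀ t ∈ Set.Icc (0:ℝ) T, ∃ d : ℝ,
      HasDerivWithinAt
        (fun s => ∫ x in (0:ℝ)..L,
          ((q 0 s x - qb 0 s x) ^ 2 / 2
            + τ / 2 * ∑ j ∈ Finset.Icc 1 (m - 1), (q j s x - qb j s x) ^ 2))
        d (Set.Icc (0:ℝ) T) t ∧
      d ≤ (Mf * B + 1) *
            (∫ x in (0:ℝ)..L,
              ((q 0 t x - qb 0 t x) ^ 2 / 2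
                + τ / 2 * ∑ j ∈ Finset.Icc 1 (m - 1), (q j t x - qb j t x) ^ 2))
          + τ ^ 2 * ∫ x in (0:ℝ)..L, R t x ^ 2 := by
  intro t ht
  lift Mf to ℝ≥0 using (abs_nonneg _).trans (hMf 0)
  have hlip : LipschitzWith Mf (deriv f) :=
    lipschitzWith_of_nnnorm_deriv_le hf.differentiable_deriv_two hMf
  obtain ⟨d, hd, hle⟩ := odd_order_relative_energy_inequality_general (t := t) hm hμ hL.le hτ.le
    (hf.of_le one_le_two) hlip hq hqb (hR.uncurry_left t).continuousOn
    (fun j hj => (hper j hj t).eq) (fun j hj => (hperb j hj t).eq) (fun x _ => hB t x)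
    (fun x _ => ⟨heq₀ t ht x, fun j hj => heq j hj t ht x⟩)
    (fun x _ => ⟨heqb₀ t ht x, fun j hj => heqb j hj t ht x⟩)
  have hresidual : 0 ≤ ∫ x in (0 : ℝ)..L, R t x ^ 2 :=
    intervalIntegral.integral_nonneg hL.le fun x _ => sq_nonneg _
  exact ⟨d, hd.hasDerivWithinAt, hle.trans <| add_le_add le_rfl <|
    mul_le_mul_of_nonneg_right (half_le_self (sq_nonneg τ)) hresidual⟩
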